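/- Let n be a positive integer and D a symmetric n×n real matrix. Suppose q, p, w₁, w₂ : ℝ → ℝⁿ are differentiable and satisfy for all t the structure-preserving lifted FOM of the sine-Gordon equation: q′ = p, p′ = Dq − 2(w₁ ⊙ w₂), w₁′ = ½ (w₂ ⊙ p), w₂′ = −½ (w₁ ⊙ p). Then the lifted energy t ↦ ½ p(t)ᵀp(t) − ½ q(t)ᵀD q(t) + 2 w₁(t)ᵀw₁(t) is constant in t. -/

import Mathlib

open Matrix BigOperators

/-! The derivative of the energy is `p ⬝ᵥ p' - (p ⬝ᵥ D q + q ⬝ᵥ D p) / 2 + 4 (w₁ ⬝ᵥ w₁')`.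
Symmetry of `D` makes the middle term `p ⬝ᵥ D q`, which cancels the linear force in `p ⬝ᵥ p'`;
the remaining `-2 ∑ pᵢ w₁ᵢ w₂ᵢ` is cancelled by `4 (w₁ ⬝ᵥ w₁')`, since `w₁' = (w₂ ⊙ p) / 2`.
A function on `ℝ` with zero derivative is constant. -/

theorem hasDerivAt_dotProduct {n : ℕ} {u v : ℝ → Fin n → ℝ} {u' v' : Fin n → ℝ} {t : ℝ}
    (hu : HasDerivAt u u' t) (hv : HasDerivAt v v' t) :
    HasDerivAt (fun s => u s ⬝ᵥ v s) (u' ⬝ᵥ v t + u t ⬝ᵥ v') t := by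
  have h := HasDerivAt.fun_sum (u := Finset.univ)
    fun i _ => (hasDerivAt_pi.1 hu i).fun_mul (hasDerivAt_pi.1 hv i)
  simpa only [dotProduct, Finset.sum_add_distrib] using h

theorem hasDerivAt_mulVec {n : ℕ} (D : Matrix (Fin n) (Fin n) ℝ) {u : ℝ → Fin n → ℝ}
    {u' : Fin n → ℝ} {t : ℝ} (hu : HasDerivAt u u' t) :
    HasDerivAt (fun s => D.mulVec (u s)) (D.mulVec u') t :=
  (LinearMap.toContinuousLinearMap D.mulVecLin).hasFDerivAt.comp_hasDerivAt t hu

/-- Energy conservation of the structure-preserving (energy-quadratization) lifted FOM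
of the sine-Gordon equation. -/
theorem sp_lifting_sine_gordon_fom_conserves_energy
    (n : ℕ) (hn : 0 < n)
    (D : Matrix (Fin n) (Fin n) ℝ) (hD : D.IsSymm)
    (q p w1 w2 : ℝ → Fin n → ℝ)
    (hq : ∀ t, HasDerivAt q (p t) t)
    (hp : ∀ t, HasDerivAt p
      (D.mulVec (q t) - (2 : ℝ) • fun i => w1 t i * w2 t i) t)
    (hw1 : ∀ t, HasDerivAt w1 ((1 / 2 : ℝ) • fun i => w2 t i * p t i) t)
    (hw2 : ∀ t, HasDerivAt w2 (-((1 / 2 : ℝ) • fun i => w1 t i * p t i)) t) :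
    ∀ s t : ℝ,
      (1 / 2) * (p s ⬝ᵥ p s) - (1 / 2) * (q s ⬝ᵥ D.mulVec (q s)) + 2 * (w1 s ⬝ᵥ w1 s)
      = (1 / 2) * (p t ⬝ᵥ p t) - (1 / 2) * (q t ⬝ᵥ D.mulVec (q t)) + 2 * (w1 t ⬝ᵥ w1 t) := by
  have key : ∀ t, HasDerivAt (fun s => (1 / 2) * (p s ⬝ᵥ p s)
      - (1 / 2) * (q s ⬝ᵥ D.mulVec (q s)) + 2 * (w1 s ⬝ᵥ w1 s)) 0 t := by
    intro t
    have h := (((hasDerivAt_dotProduct (hp t) (hp t)).const_mul (1 / 2 : ℝ)).fun_sub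
      ((hasDerivAt_dotProduct (hq t) (hasDerivAt_mulVec D (hq t))).const_mul (1 / 2 : ℝ))).fun_add
      ((hasDerivAt_dotProduct (hw1 t) (hw1 t)).const_mul (2 : ℝ))
    refine h.congr_deriv ?_
    have hsymm : q t ⬝ᵥ D.mulVec (p t) = p t ⬝ᵥ D.mulVec (q t) := by
      rw [dotProduct_mulVec, ← mulVec_transpose, hD.eq, dotProduct_comm]
    have hcancel : (fun i => w2 t i * p t i) ⬝ᵥ w1 t = (fun i => w1 t i * w2 t i) ⬝ᵥ p t :=
      Finset.sum_congr rfl fun i _ => by ring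
    simp only [dotProduct_comm (p t) (_ - _), dotProduct_comm (w1 t) (_ • _), sub_dotProduct,
      smul_dotProduct, smul_eq_mul, hcancel, hsymm, dotProduct_comm (D.mulVec (q t)) (p t)]
    ring
  intro s t
  exact is_const_of_deriv_eq_zero (fun x => (key x).differentiableAt) (fun x => (key x).deriv) s t
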